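/- Let C ∈ ℝ^{n_y × m n_z}, D ∈ ℝ^{n_y × n_u}; define A, B, K from C and D by the shift construction and 𝒜 = A − KC, ℬ = B − KD; build Φ^p, Φ^u, Φ^y as the observability and Markov-parameter matrices and set P = (I − Φ^y)^{−1} Φ^p, F = (I − Φ^y)^{−1} Φ^u. Fix z_p(t) ∈ ℝ^{m n_z}, functions c_0, …, c_J : ℝ^{h n_u} × ℝ^{h n_y} → ℝ, and J ≥ 0. Then a pair (u_f^⋆, y_f^⋆) ∈ ℝ^{h n_u} × ℝ^{h n_y} is optimal for the TPC problem — minimize c_0(u_f, y_f) subject to c_j(u_f, y_f) ≤ 0 for j = 1,…,J and y_f = P z_p(t) + F u_f — if and only if the tuple (x^⋆(1|t),…,x^⋆(h+1|t), u^⋆(1|t),…,u^⋆(h|t), y^⋆(1|t),…,y^⋆(h|t)), where u_f^⋆ = (u^⋆(1|t),…,u^⋆(h|t)), y_f^⋆ = (y^⋆(1|t),…,y^⋆(h|t)), x^⋆(1|t) = z_p(t), x^⋆(i+1|t) = A x^⋆(i|t) + B u^⋆(i|t), and y^⋆(i|t) = C x^⋆(i|t) + D u^⋆(i|t) for i = 1,…,h,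 is optimal for the MPC problem — minimize c_0((u(1|t),…,u(h|t)), (y(1|t),…,y(h|t))) over states x(1|t),…,x(h+1|t) ∈ ℝ^{m n_z}, inputs u(1|t),…,u(h|t) ∈ ℝ^{n_u}, and outputs y(1|t),…,y(h|t) ∈ ℝ^{n_y}, subject to c_j ≤ 0 for j = 1,…,J, x(1|t) = z_p(t), x(i+1|t) = A x(i|t) + B u(i|t), and y(i|t) = C x(i|t) + D u(i|t) for i = 1,…,h. -/

import Mathlib

open Matrix Finset

/-- Shift construction: `A` has first `(m−1)n_z` rows `[0 I]`, next `n_u` rows zero, and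
last `n_y` rows equal to `C`. -/
def shiftA (nu ny m : ℕ) (C : Matrix (Fin ny) (Fin m × (Fin nu ⊕ Fin ny)) ℝ) :
    Matrix (Fin m × (Fin nu ⊕ Fin ny)) (Fin m × (Fin nu ⊕ Fin ny)) ℝ :=
  fun p q =>
    if hp : (p.1 : ℕ) + 1 < m then (if q = (⟨(p.1 : ℕ) + 1, hp⟩, p.2) then 1 else 0)
    else Sum.elim (fun _ : Fin nu => (0 : ℝ)) (fun b : Fin ny => C b q) p.2

/-- Shift construction: `B` is the vertical stack of `0`, `I_{n_u}`, and `D`. -/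
def shiftB (nu ny m : ℕ) (D : Matrix (Fin ny) (Fin nu) ℝ) :
    Matrix (Fin m × (Fin nu ⊕ Fin ny)) (Fin nu) ℝ :=
  fun p a =>
    if (p.1 : ℕ) + 1 = m then
      Sum.elim (fun a' : Fin nu => if a' = a then (1 : ℝ) else 0) (fun b : Fin ny => D b a) p.2
    else 0

/-- Shift construction: `K` is the vertical stack of `0` and `I_{n_y}`. -/
def shiftK (nu ny m : ℕ) : Matrix (Fin m × (Fin nu ⊕ Fin ny)) (Fin ny) ℝ :=
  fun p b =>
    if (p.1 : ℕ) + 1 = m then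
      Sum.elim (fun _ : Fin nu => (0 : ℝ)) (fun b' : Fin ny => if b' = b then (1 : ℝ) else 0) p.2
    else 0

/-- Observability matrix `Φ^p`: vertical stack of `C`, `C𝒜`, …, `C𝒜^{h−1}`. -/
noncomputable def obsMat (σ : Type) (ny h : ℕ) (C : Matrix (Fin ny) σ ℝ)
    (𝒜 : Matrix σ σ ℝ) [Fintype σ] [DecidableEq σ] : Matrix (Fin h × Fin ny) σ ℝ :=
  fun q k => (C * 𝒜 ^ (q.1 : ℕ)) q.2 k

/-- Markov-parameter matrix `Φ^u`: block lower triangular with diagonal blocks `D` and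
`(i,j)` blocks `C 𝒜^{i−j−1} ℬ` for `i > j`. -/
noncomputable def markovU (σ : Type) (nu ny h : ℕ) (C : Matrix (Fin ny) σ ℝ)
    (𝒜 : Matrix σ σ ℝ) (ℬ : Matrix σ (Fin nu) ℝ) (D : Matrix (Fin ny) (Fin nu) ℝ)
    [Fintype σ] [DecidableEq σ] : Matrix (Fin h × Fin ny) (Fin h × Fin nu) ℝ :=
  fun q r =>
    if (q.1 : ℕ) = (r.1 : ℕ) then D q.2 r.2
    else if (r.1 : ℕ) < (q.1 : ℕ) then (C * 𝒜 ^ ((q.1 : ℕ) - (r.1 : ℕ) - 1) * ℬ) q.2 r.2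
    else 0

/-- Markov-parameter matrix `Φ^y`: strictly block lower triangular with
`(i,j)` blocks `C 𝒜^{i−j−1} K` for `i > j`. -/
noncomputable def markovY (σ : Type) (ny h : ℕ) (C : Matrix (Fin ny) σ ℝ)
    (𝒜 : Matrix σ σ ℝ) (K : Matrix σ (Fin ny) ℝ) [Fintype σ] [DecidableEq σ] :
    Matrix (Fin h × Fin ny) (Fin h × Fin ny) ℝ :=
  fun q r =>
    if (r.1 : ℕ) < (q.1 : ℕ) then (C * 𝒜 ^ ((q.1 : ℕ) - (r.1 : ℕ) - 1) * K) q.2 r.2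
    else 0

/-- The state trajectory generated by the dynamics `x(i+1) = A x(i) + B u(i)` from `x(0) = zp`. -/
noncomputable def xTraj (nu ny m : ℕ)
    (A : Matrix (Fin m × (Fin nu ⊕ Fin ny)) (Fin m × (Fin nu ⊕ Fin ny)) ℝ)
    (B : Matrix (Fin m × (Fin nu ⊕ Fin ny)) (Fin nu) ℝ)
    (zp : Fin m × (Fin nu ⊕ Fin ny) → ℝ) (us : ℕ → Fin nu → ℝ) :
    ℕ → (Fin m × (Fin nu ⊕ Fin ny)) → ℝ
  | 0 => zp
  | k + 1 => A *ᵥ xTraj nu ny m A B zp us k + B *ᵥ us k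

lemma aux_isUnit {σ : Type} [Fintype σ] [DecidableEq σ] (ny h : ℕ) (C : Matrix (Fin ny) σ ℝ)
    (𝒜 : Matrix σ σ ℝ) (K : Matrix σ (Fin ny) ℝ) : IsUnit (1 - markovY σ ny h C 𝒜 K) := by
  rw [← Matrix.mulVec_injective_iff_isUnit]
  intro v w hvw
  have h0 : (1 - markovY σ ny h C 𝒜 K) *ᵥ (v - w) = 0 := by
    rw [Matrix.mulVec_sub]; exact sub_eq_zero.mpr hvw
  rw [← sub_eq_zero]
  generalize v - w = z at h0
  rw [Matrix.sub_mulVec, Matrix.one_mulVec, sub_eq_zero] at h0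
  have key : ∀ n : ℕ, ∀ q : Fin h × Fin ny, (q.1 : ℕ) = n → z q = 0 := by
    intro n
    induction n using Nat.strong_induction_on with
    | _ n ih =>
      intro q hq
      rw [h0]
      simp only [Matrix.mulVec, dotProduct]
      apply Finset.sum_eq_zero
      intro r _
      by_cases hr : (r.1 : ℕ) < (q.1 : ℕ)
      · rw [ih r.1 (by omega) r rfl, mul_zero]
      · simp [markovY, hr]
  funext q
  exact key _ q rfl

lemma aux_sum {h : ℕ} (f : ℕ → ℝ) (i : ℕ) (hi : i ≤ h) :
    (∑ j : Fin h, if (j : ℕ) < i then f j else 0) = ∑ j ∈ Finset.range i, f j := by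
  rw [Fin.sum_univ_eq_sum_range (fun j => if j < i then f j else 0) h, ← Finset.sum_filter]
  congr 1
  ext j
  simp
  omega

lemma aux_Y {σ : Type} [Fintype σ] [DecidableEq σ] (ny h : ℕ) (C : Matrix (Fin ny) σ ℝ)
    (𝒜 : Matrix σ σ ℝ) (K : Matrix σ (Fin ny) ℝ) (Y : ℕ → Fin ny → ℝ) (q : Fin h × Fin ny) :
    (markovY σ ny h C 𝒜 K *ᵥ fun r => Y r.1 r.2) q =
      ∑ j ∈ Finset.range (q.1 : ℕ), ((C * 𝒜 ^ ((q.1 : ℕ) - j - 1) * K) *ᵥ Y j) q.2 := by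
  rw [← aux_sum (h := h) _ _ q.1.2.le]
  simp only [Matrix.mulVec, dotProduct, Fintype.sum_prod_type, markovY]
  refine Finset.sum_congr rfl fun j _ => ?_
  split_ifs <;> simp

lemma aux_U {σ : Type} [Fintype σ] [DecidableEq σ] (nu ny h : ℕ) (C : Matrix (Fin ny) σ ℝ)
    (𝒜 : Matrix σ σ ℝ) (B : Matrix σ (Fin nu) ℝ) (D : Matrix (Fin ny) (Fin nu) ℝ)
    (U : ℕ → Fin nu → ℝ) (q : Fin h × Fin ny) :
    (markovU σ nu ny h C 𝒜 B D *ᵥ fun r => U r.1 r.2) q =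
      (D *ᵥ U q.1) q.2 +
      ∑ j ∈ Finset.range (q.1 : ℕ), ((C * 𝒜 ^ ((q.1 : ℕ) - j - 1) * B) *ᵥ U j) q.2 := by
  rw [← aux_sum (h := h) _ _ q.1.2.le]
  have hD : (D *ᵥ U q.1) q.2 = ∑ j : Fin h, if q.1 = j then (D *ᵥ U j) q.2 else 0 := by simp
  rw [hD, ← Finset.sum_add_distrib]
  simp only [Matrix.mulVec, dotProduct, Fintype.sum_prod_type, markovU]
  refine Finset.sum_congr rfl fun j _ => ?_
  by_cases h1 : q.1 = j
  · subst h1; simp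
  · have h2 : (q.1 : ℕ) ≠ j := fun e => h1 (Fin.ext e)
    simp only [h1, h2, if_false]
    split_ifs <;> simp

/-- innovation-form state -/
noncomputable def xInn {σ : Type} [Fintype σ] {nu ny : ℕ} (𝒜 : Matrix σ σ ℝ)
    (B : Matrix σ (Fin nu) ℝ) (K : Matrix σ (Fin ny) ℝ) (z : σ → ℝ)
    (U : ℕ → Fin nu → ℝ) (Y : ℕ → Fin ny → ℝ) : ℕ → σ → ℝ
  | 0 => z
  | k + 1 => 𝒜 *ᵥ xInn 𝒜 B K z U Y k + (B *ᵥ U k + K *ᵥ Y k)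

lemma xInn_eq {σ : Type} [Fintype σ] [DecidableEq σ] {nu ny : ℕ} (𝒜 : Matrix σ σ ℝ)
    (B : Matrix σ (Fin nu) ℝ) (K : Matrix σ (Fin ny) ℝ) (z : σ → ℝ)
    (U : ℕ → Fin nu → ℝ) (Y : ℕ → Fin ny → ℝ) (k : ℕ) :
    xInn 𝒜 B K z U Y k = 𝒜 ^ k *ᵥ z +
      ∑ j ∈ Finset.range k, 𝒜 ^ (k - j - 1) *ᵥ (B *ᵥ U j + K *ᵥ Y j) := by
  induction k with
  | zero => simp [xInn]
  | succ k ih =>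
    rw [xInn, ih, Finset.sum_range_succ, Matrix.mulVec_add, Matrix.mulVec_mulVec, ← pow_succ',
      Matrix.mulVec_sum, add_assoc]
    congr 1
    congr 1
    · refine Finset.sum_congr rfl fun j hj => ?_
      have hj' := Finset.mem_range.mp hj
      rw [Matrix.mulVec_mulVec, ← pow_succ']
      congr 2
      omega
    · simp

lemma aux_pred {σ : Type} [Fintype σ] [DecidableEq σ] (nu ny h : ℕ) (C : Matrix (Fin ny) σ ℝ)
    (𝒜 : Matrix σ σ ℝ) (B : Matrix σ (Fin nu) ℝ) (K : Matrix σ (Fin ny) ℝ)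
    (D : Matrix (Fin ny) (Fin nu) ℝ) (z : σ → ℝ)
    (U : ℕ → Fin nu → ℝ) (Y : ℕ → Fin ny → ℝ) (uf : Fin h × Fin nu → ℝ)
    (yf : Fin h × Fin ny → ℝ) (hU : ∀ r, uf r = U r.1 r.2) (hY : ∀ r, yf r = Y r.1 r.2) :
    yf = ((1 - markovY σ ny h C 𝒜 K)⁻¹ * obsMat σ ny h C 𝒜) *ᵥ z +
      ((1 - markovY σ ny h C 𝒜 K)⁻¹ * markovU σ nu ny h C 𝒜 B D) *ᵥ uf ↔
    ∀ k < h, Y k = C *ᵥ xInn 𝒜 B K z U Y k + D *ᵥ U k := by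
  have hu := aux_isUnit ny h C 𝒜 K
  have hdet := (Matrix.isUnit_iff_isUnit_det _).mp hu
  have e1 : (yf = ((1 - markovY σ ny h C 𝒜 K)⁻¹ * obsMat σ ny h C 𝒜) *ᵥ z +
      ((1 - markovY σ ny h C 𝒜 K)⁻¹ * markovU σ nu ny h C 𝒜 B D) *ᵥ uf) ↔
      yf = obsMat σ ny h C 𝒜 *ᵥ z + markovU σ nu ny h C 𝒜 B D *ᵥ uf +
        markovY σ ny h C 𝒜 K *ᵥ yf := by
    rw [← Matrix.mulVec_mulVec, ← Matrix.mulVec_mulVec, ← Matrix.mulVec_add,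
      ← (Matrix.mulVec_injective_iff_isUnit.mpr hu).eq_iff, Matrix.mulVec_mulVec,
      Matrix.mul_nonsing_inv _ hdet, Matrix.one_mulVec, Matrix.sub_mulVec, Matrix.one_mulVec,
      sub_eq_iff_eq_add]
  rw [e1]
  obtain rfl : uf = fun r => U r.1 r.2 := funext hU
  obtain rfl : yf = fun r => Y r.1 r.2 := funext hY
  have e2 : ∀ q : Fin h × Fin ny, (obsMat σ ny h C 𝒜 *ᵥ z +
      markovU σ nu ny h C 𝒜 B D *ᵥ (fun r => U r.1 r.2) +
        markovY σ ny h C 𝒜 K *ᵥ (fun r => Y r.1 r.2)) q =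
      (C *ᵥ xInn 𝒜 B K z U Y q.1 + D *ᵥ U q.1) q.2 := by
    intro q
    rw [Pi.add_apply, Pi.add_apply, aux_U, aux_Y, xInn_eq]
    have e3 : (obsMat σ ny h C 𝒜 *ᵥ z) q = ((C * 𝒜 ^ (q.1 : ℕ)) *ᵥ z) q.2 := rfl
    rw [e3]
    simp only [Matrix.mulVec_add, Matrix.mulVec_sum, Pi.add_apply, Finset.sum_apply,
      Matrix.mulVec_mulVec, Finset.sum_add_distrib, Matrix.mul_assoc]
    ring
  constructor
  · intro H k hk
    funext b
    have := congrFun H (⟨k, hk⟩, b)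
    rw [e2] at this
    exact this
  · intro H
    funext q
    rw [e2]
    exact congrFun (H q.1 q.1.2) q.2

lemma aux_main (nu ny m h : ℕ) (C : Matrix (Fin ny) (Fin m × (Fin nu ⊕ Fin ny)) ℝ)
    (A : Matrix (Fin m × (Fin nu ⊕ Fin ny)) (Fin m × (Fin nu ⊕ Fin ny)) ℝ)
    (B : Matrix (Fin m × (Fin nu ⊕ Fin ny)) (Fin nu) ℝ)
    (K : Matrix (Fin m × (Fin nu ⊕ Fin ny)) (Fin ny) ℝ)
    (D : Matrix (Fin ny) (Fin nu) ℝ) (z : Fin m × (Fin nu ⊕ Fin ny) → ℝ)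
    (U : ℕ → Fin nu → ℝ) (Y : ℕ → Fin ny → ℝ) :
    (∀ k < h, Y k = C *ᵥ xInn (A - K * C) (B - K * D) K z U Y k + D *ᵥ U k) ↔
    ∀ k < h, Y k = C *ᵥ xTraj nu ny m A B z U k + D *ᵥ U k := by
  have step : ∀ k, Y k = C *ᵥ xTraj nu ny m A B z U k + D *ᵥ U k →
      xInn (A - K * C) (B - K * D) K z U Y k = xTraj nu ny m A B z U k →
      xInn (A - K * C) (B - K * D) K z U Y (k+1) = xTraj nu ny m A B z U (k+1) := by
    intro k h1 h2
    rw [xInn, xTraj, h2, h1]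
    simp only [Matrix.sub_mulVec, Matrix.mulVec_add, Matrix.mulVec_mulVec]
    abel
  constructor
  · intro H
    have : ∀ k ≤ h, xInn (A - K * C) (B - K * D) K z U Y k = xTraj nu ny m A B z U k := by
      intro k
      induction k with
      | zero => intro _; rfl
      | succ k ih =>
        intro hk
        have h2 := ih (by omega)
        exact step k (h2 ▸ H k (by omega)) h2
    intro k hk
    rw [← this k hk.le]
    exact H k hk
  · intro H
    have : ∀ k ≤ h, xInn (A - K * C) (B - K * D) K z U Y k = xTraj nu ny m A B z U k := by
      intro k
      induction k with
      | zero => intro _; rfl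
      | succ k ih =>
        intro hk
        exact step k (H k (by omega)) (ih (by omega))
    intro k hk
    rw [this k hk.le]
    exact H k hk

lemma aux_final (nu ny m h : ℕ) (C : Matrix (Fin ny) (Fin m × (Fin nu ⊕ Fin ny)) ℝ)
    (A : Matrix (Fin m × (Fin nu ⊕ Fin ny)) (Fin m × (Fin nu ⊕ Fin ny)) ℝ)
    (B : Matrix (Fin m × (Fin nu ⊕ Fin ny)) (Fin nu) ℝ)
    (K : Matrix (Fin m × (Fin nu ⊕ Fin ny)) (Fin ny) ℝ)
    (D : Matrix (Fin ny) (Fin nu) ℝ) (z : Fin m × (Fin nu ⊕ Fin ny) → ℝ)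
    (uf : Fin h × Fin nu → ℝ) (yf : Fin h × Fin ny → ℝ) :
    yf = ((1 - markovY _ ny h C (A - K * C) K)⁻¹ * obsMat _ ny h C (A - K * C)) *ᵥ z +
      ((1 - markovY _ ny h C (A - K * C) K)⁻¹ *
        markovU _ nu ny h C (A - K * C) (B - K * D) D) *ᵥ uf ↔
    ∀ i : Fin h, (fun b => yf (i, b)) = C *ᵥ xTraj nu ny m A B z
        (fun k a => if hk : k < h then uf (⟨k, hk⟩, a) else 0) (i : ℕ) +
        D *ᵥ (fun a => uf (i, a)) := by
  rw [aux_pred nu ny h C (A - K * C) (B - K * D) K D z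
    (fun k a => if hk : k < h then uf (⟨k, hk⟩, a) else 0)
    (fun k a => if hk : k < h then yf (⟨k, hk⟩, a) else 0) uf yf (by simp) (by simp), aux_main]
  constructor
  · intro H i
    have := H i i.2
    simpa using this
  · intro H k hk
    have := H ⟨k, hk⟩
    simpa [hk] using this

lemma aux_traj (nu ny m h : ℕ)
    (A : Matrix (Fin m × (Fin nu ⊕ Fin ny)) (Fin m × (Fin nu ⊕ Fin ny)) ℝ)
    (B : Matrix (Fin m × (Fin nu ⊕ Fin ny)) (Fin nu) ℝ)
    (z : Fin m × (Fin nu ⊕ Fin ny) → ℝ)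
    (x : Fin (h + 1) → (Fin m × (Fin nu ⊕ Fin ny)) → ℝ)
    (us : Fin h → Fin nu → ℝ) (h0 : x 0 = z)
    (hx : ∀ i : Fin h, x i.succ = A *ᵥ x i.castSucc + B *ᵥ us i) (i : Fin (h + 1)) :
    x i = xTraj nu ny m A B z (fun k a => if hk : k < h then us ⟨k, hk⟩ a else 0) (i : ℕ) := by
  induction i using Fin.induction with
  | zero => exact h0
  | succ i ih =>
    rw [hx, ih, Fin.val_succ, xTraj]
    simp

/-- **Corollary 1.** With the state-space predictor `P = (I−Φ^y)⁻¹ Φ^p`,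
`F = (I−Φ^y)⁻¹ Φ^u` built from `C, D` via the shift construction, the pair `(u_f⋆, y_f⋆)` is
optimal for the TPC problem if and only if the corresponding tuple of states
`x⋆(1|t), …, x⋆(h+1|t)` (with `x⋆(1|t) = z_p(t)`, `x⋆(i+1|t) = A x⋆(i|t) + B u⋆(i|t)`),
inputs `u⋆(1|t), …, u⋆(h|t)`, and outputs `y⋆(1|t), …, y⋆(h|t)` is optimal for the MPC
problem. -/
theorem tpc_optimal_iff_mpc_optimal
    (nu ny m h J : ℕ) (hnu : 0 < nu) (hny : 0 < ny) (hm : 0 < m) (hh : 0 < h)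
    (C : Matrix (Fin ny) (Fin m × (Fin nu ⊕ Fin ny)) ℝ)
    (D : Matrix (Fin ny) (Fin nu) ℝ)
    (zp : Fin m × (Fin nu ⊕ Fin ny) → ℝ)
    (c : ℕ → ((Fin h × Fin nu → ℝ) × (Fin h × Fin ny → ℝ)) → ℝ)
    (ufstar : Fin h × Fin nu → ℝ) (yfstar : Fin h × Fin ny → ℝ) :
    letI A := shiftA nu ny m C
    letI B := shiftB nu ny m D
    letI K := shiftK nu ny m
    letI 𝒜 := A - K * C
    letI ℬ := B - K * D
    letI Φy := markovY (Fin m × (Fin nu ⊕ Fin ny)) ny h C 𝒜 K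
    letI P := (1 - Φy)⁻¹ * obsMat (Fin m × (Fin nu ⊕ Fin ny)) ny h C 𝒜
    letI F := (1 - Φy)⁻¹ * markovU (Fin m × (Fin nu ⊕ Fin ny)) nu ny h C 𝒜 ℬ D
    -- feasibility and optimality for the TPC problem
    letI feasT : (Fin h × Fin nu → ℝ) → (Fin h × Fin ny → ℝ) → Prop := fun uf yf =>
      (∀ j : ℕ, 1 ≤ j → j ≤ J → c j (uf, yf) ≤ 0) ∧ yf = P *ᵥ zp + F *ᵥ uf
    -- feasibility for the MPC problem
    letI feasM : (Fin (h + 1) → (Fin m × (Fin nu ⊕ Fin ny)) → ℝ) →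
        (Fin h → Fin nu → ℝ) → (Fin h → Fin ny → ℝ) → Prop := fun x us ys =>
      (∀ j : ℕ, 1 ≤ j → j ≤ J →
        c j (fun r : Fin h × Fin nu => us r.1 r.2, fun q : Fin h × Fin ny => ys q.1 q.2) ≤ 0) ∧
      x 0 = zp ∧
      (∀ i : Fin h, x i.succ = A *ᵥ x i.castSucc + B *ᵥ us i) ∧
      (∀ i : Fin h, ys i = C *ᵥ x i.castSucc + D *ᵥ us i)
    -- the candidate MPC tuple built from (ufstar, yfstar)
    letI ustar : Fin h → Fin nu → ℝ := fun i a => ufstar (i, a)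
    letI ystar : Fin h → Fin ny → ℝ := fun i b => yfstar (i, b)
    letI xstar : Fin (h + 1) → (Fin m × (Fin nu ⊕ Fin ny)) → ℝ := fun i =>
      xTraj nu ny m A B zp
        (fun k a => if hk : k < h then ufstar (⟨k, hk⟩, a) else 0) (i : ℕ)
    -- optimality of (ufstar, yfstar) for TPC iff optimality of (xstar, ustar, ystar) for MPC
    ((feasT ufstar yfstar ∧
        ∀ uf yf, feasT uf yf → c 0 (ufstar, yfstar) ≤ c 0 (uf, yf))
    ↔
    (feasM xstar ustar ystar ∧
        ∀ x us ys, feasM x us ys →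
          c 0 (fun r : Fin h × Fin nu => ustar r.1 r.2,
               fun q : Fin h × Fin ny => ystar q.1 q.2) ≤
          c 0 (fun r : Fin h × Fin nu => us r.1 r.2,
               fun q : Fin h × Fin ny => ys q.1 q.2))) := by
  beta_reduce
  constructor
  · rintro ⟨h1, h2⟩
    refine ⟨⟨h1.1, rfl, ?_, (aux_final nu ny m h C _ _ _ D zp _ _).mp h1.2⟩, ?_⟩
    · intro i
      simp only [Fin.val_succ, xTraj, Fin.val_castSucc]
      simp
    · intro x us ys hf
      refine h2 _ _ ⟨hf.1, (aux_final nu ny m h C _ _ _ D zp _ _).mpr ?_⟩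
      intro i
      have h1 := hf.2.2.2 i
      rw [aux_traj nu ny m h _ _ zp x us hf.2.1 hf.2.2.1 i.castSucc] at h1
      exact h1
  · rintro ⟨h1, h2⟩
    refine ⟨⟨h1.1, (aux_final nu ny m h C _ _ _ D zp _ _).mpr h1.2.2.2⟩, ?_⟩
    intro uf yf hf
    refine h2 (fun i => xTraj nu ny m (shiftA nu ny m C) (shiftB nu ny m D) zp
        (fun k a => if hk : k < h then uf (⟨k, hk⟩, a) else 0) (i : ℕ))
        (fun i a => uf (i, a)) (fun i b => yf (i, b))
        ⟨hf.1, rfl, ?_, (aux_final nu ny m h C _ _ _ D zp _ _).mp hf.2⟩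
    intro i
    simp only [Fin.val_succ, xTraj, Fin.val_castSucc]
    simp
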